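/- Let h, k ≥ 1 and let H ∈ ℕ be such that every edge coloring of a complete graph on more than H vertices with at most k colors contains a monochromatic clique of size h+1. Let x be an infinite word over a finite alphabet A, let u be a nonempty finite word over A, and set y = u^H x. Then for every factor coloring c of y using at most k colors, there exist integers 0 = n_0 < n_1 < ⋯ < n_h such that all the factors y_{[n_i, n_j−1]} for 0 ≤ i < j ≤ h have the same color under c. In particular, some prefix of y admits a strongly c-monochromatic factorization of length h. -/

import Mathlib

/-- The factor of the infinite word `x` of length `n` starting at position `i`,
i.e. the word `x_i x_{i+1} ⋯ x_{i+n-1}`. -/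
def seg {A : Type*} (x : ℕ → A) (i n : ℕ) : List A :=
  (List.range n).map fun k => x (i + k)

/-- `u` is a (nonempty, finite) factor of the infinite word `x`. -/
def IsFactor {A : Type*} (x : ℕ → A) (u : List A) : Prop :=
  u ≠ [] ∧ ∃ i, u = seg x i u.length

/-- `u` is a (finite) prefix of the infinite word `x`. -/
def IsPrefixOf {A : Type*} (x : ℕ → A) (u : List A) : Prop :=
  u = seg x 0 u.length

/-- The finite word `u` occurs in the finite word `v` at position `i`. -/
def OccursAt {A : Type*} (u v : List A) (i : ℕ) : Prop :=
  i + u.length ≤ v.length ∧ (v.drop i).take u.length = u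

/-- `w` is a return word to `u` in `x`: `w` is nonempty, `w ++ u` is a factor of
`x`, and `u` occurs exactly twice in `w ++ u`. -/
def IsReturn {A : Type*} (x : ℕ → A) (u w : List A) : Prop :=
  w ≠ [] ∧ IsFactor x (w ++ u) ∧ {i | OccursAt u (w ++ u) i}.ncard = 2

/-- The set of return words to `u` in `x`. -/
def Ret {A : Type*} (x : ℕ → A) (u : List A) : Set (List A) :=
  {w | IsReturn x u w}

/-- `x` is uniformly recurrent: every factor has a nonempty and finite set of
return words. -/
def UniformlyRecurrent {A : Type*} (x : ℕ → A) : Prop :=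
  ∀ u, IsFactor x u → (Ret x u).Nonempty ∧ (Ret x u).Finite

/-- `x` is aperiodic: there is no `n ≥ 1` with `x (i + n) = x i` for all `i`. -/
def Aperiodic {A : Type*} (x : ℕ → A) : Prop :=
  ¬ ∃ n : ℕ, 1 ≤ n ∧ ∀ i : ℕ, x (i + n) = x i

/-- The infinite word obtained by prepending a finite word `w` to the infinite word `x`. -/
def prepend {A : Type*} (w : List A) (x : ℕ → A) : ℕ → A := fun n =>
  if h : n < w.length then w[n] else x (n - w.length)

/-!
Color the edge `{s, t}`, `s < t`, of the complete graph on `{0, …, H}` by the color of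
`u ^ (t - s)`. If `g₀ < ⋯ < g_h` is a monochromatic clique, cut `y = u ^ H x` at the positions
`n_i = (g_i - g₀) * |u|`: all cuts lie inside the prefix `u ^ H`, so the factor between `n_i` and
`n_j` is `u ^ (g_j - g_i)`, whose color is that of an edge of the clique.
-/

/-- The arrow relation `N → (m)²_C` of Ramsey theory. A coloring of the edges of the complete
graph on `Fin N` is encoded as a function of two vertices, of which only the values at pairs `s < t`
matter, and a clique is given by its increasing enumeration. -/
def RamseyArrow (N m : ℕ) (C : Type*) : Prop :=
  ∀ c : Fin N → Fin N → C, ∃ g : Fin m → Fin N, StrictMono g ∧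
    ∃ col : C, ∀ i j : Fin m, i < j → c (g i) (g j) = col

/-- The cuts `n 0, …, n h` are monochromatic for the factor coloring `c` of `y` when all the
factors of `y` delimited by two of them have the same color. -/
def MonochromaticCuts {A C : Type*} {y : ℕ → A} (c : {v : List A // IsFactor y v} → C) {h : ℕ}
    (n : Fin (h + 1) → ℕ) : Prop :=
  ∃ col : C, ∀ i j : Fin (h + 1), i < j → ∀ hf : IsFactor y (seg y (n i) (n j - n i)),
    c ⟨seg y (n i) (n j - n i), hf⟩ = col

/-- The factorization `U 0, …, U (h - 1)` is strongly `c`-monochromatic: the words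
`U i ⋯ U (j - 1)`, `i < j ≤ h`, all have the same color. -/
def StronglyMonochromatic {A C : Type*} {y : ℕ → A} (c : {v : List A // IsFactor y v} → C) {h : ℕ}
    (U : Fin h → {v : List A // IsFactor y v}) : Prop :=
  ∃ col : C, ∀ i j : ℕ, i < j → j ≤ h →
    ∀ hf : IsFactor y ((((List.ofFn fun t => (U t).1).take j).drop i).flatten),
      c ⟨(((List.ofFn fun t => (U t).1).take j).drop i).flatten, hf⟩ = col

/-- The blocks into which the cuts `n 0, …, n h` divide the infinite word `y`. -/
def cutBlocks {A : Type*} (y : ℕ → A) {h : ℕ} (n : Fin (h + 1) → ℕ) (t : Fin h) : List A :=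
  seg y (n t.castSucc) (n t.succ - n t.castSucc)

theorem RamseyArrow.of_card_le {C D : Type*} [Fintype C] [Fintype D] {N m : ℕ} (hm : 1 < m)
    (hD : RamseyArrow N m D) (hCD : Fintype.card C ≤ Fintype.card D) : RamseyArrow N m C := by
  intro c
  obtain ⟨f⟩ := Function.Embedding.nonempty_of_card_le hCD
  obtain ⟨g, hg, col, hcol⟩ := hD fun s t => f (c s t)
  have hcol₀ := hcol ⟨0, by omega⟩ ⟨1, hm⟩ (by simp)
  exact ⟨g, hg, _, fun i j hij => f.injective ((hcol i j hij).trans hcol₀.symm)⟩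

section Factors

variable {A : Type*}

@[simp]
theorem length_seg (x : ℕ → A) (i n : ℕ) : (seg x i n).length = n := by
  simp [seg]

@[simp]
theorem seg_zero_right (x : ℕ → A) (i : ℕ) : seg x i 0 = [] := rfl

theorem isFactor_seg (x : ℕ → A) (i : ℕ) {n : ℕ} (hn : 0 < n) : IsFactor x (seg x i n) :=
  ⟨List.ne_nil_of_length_pos (by simpa using hn), i, by rw [length_seg]⟩

theorem isPrefixOf_seg (x : ℕ → A) (n : ℕ) : IsPrefixOf x (seg x 0 n) := by
  rw [IsPrefixOf, length_seg]

theorem seg_append_seg (x : ℕ → A) (i n m : ℕ) :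
    seg x i n ++ seg x (i + n) m = seg x i (n + m) := by
  simp [seg, List.range_add, Function.comp_def, Nat.add_assoc]

theorem seg_sub_append_seg_sub (x : ℕ → A) {a b d : ℕ} (hab : a ≤ b) (hbd : b ≤ d) :
    seg x a (b - a) ++ seg x b (d - b) = seg x a (d - a) := by
  have happend := seg_append_seg x a (b - a) (d - b)
  rwa [Nat.add_sub_cancel' hab, show b - a + (d - b) = d - a by omega] at happend

theorem seg_prepend (p v s : List A) (x : ℕ → A) :
    seg (prepend (p ++ v ++ s) x) p.length v.length = v := by
  apply List.ext_getElem (length_seg ..)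
  intro i _ hi
  have hlt : p.length + i < (p ++ v ++ s).length := by
    simp only [List.length_append]
    omega
  have happ : (p ++ v ++ s)[p.length + i] = v[i] := by
    simp [hi]
  simp only [seg, List.getElem_map, List.getElem_range, prepend, dif_pos hlt, happ]

theorem seg_prepend_flatten_replicate (u : List A) (x : ℕ → A) {a b H : ℕ} (hab : a + b ≤ H) :
    seg (prepend (List.replicate H u).flatten x) (a * u.length) (b * u.length) =
      (List.replicate b u).flatten := by
  obtain ⟨d, rfl⟩ := Nat.exists_eq_add_of_le hab
  have hseg := seg_prepend (List.replicate a u).flatten (List.replicate b u).flatten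
    (List.replicate d u).flatten x
  simpa only [List.replicate_add, List.flatten_append, List.length_flatten, List.map_replicate,
    List.sum_replicate, smul_eq_mul] using hseg

theorem flatten_drop_take_cutBlocks (y : ℕ → A) {h : ℕ} {n : Fin (h + 1) → ℕ} (hn : Monotone n)
    {i j : Fin (h + 1)} (hij : i ≤ j) :
    (((List.ofFn (cutBlocks y n)).take j).drop i).flatten = seg y (n i) (n j - n i) := by
  induction j using Fin.induction with
  | zero => simp [Fin.le_zero_iff.mp hij]
  | succ t ih =>
    rcases hij.eq_or_lt with rfl | hlt
    · simp
    have hit : i ≤ t.castSucc := Fin.le_castSucc_iff.mpr hlt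
    have htake : (List.ofFn (cutBlocks y n)).take t.succ =
        (List.ofFn (cutBlocks y n)).take t.castSucc ++ [cutBlocks y n t] := by
      simp [List.take_add_one]
    have hlen : (i : ℕ) ≤ ((List.ofFn (cutBlocks y n)).take t.castSucc).length := by
      rw [List.length_take, List.length_ofFn]
      exact le_min hit (Fin.le_last i)
    rw [htake, List.drop_append_of_le_length hlen, List.flatten_append, ih hit,
      List.flatten_singleton, cutBlocks,
      seg_sub_append_seg_sub y (hn hit) (hn t.castSucc_lt_succ.le)]

end Factors

section Colorings

variable {A C : Type*} {h H : ℕ}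

theorem exists_monochromaticCuts (hR : RamseyArrow (H + 1) (h + 1) C) (x : ℕ → A) {u : List A}
    (hu : u ≠ []) (c : {v : List A // IsFactor (prepend (List.replicate H u).flatten x) v} → C) :
    ∃ n : Fin (h + 1) → ℕ, n 0 = 0 ∧ StrictMono n ∧ MonochromaticCuts c n := by
  obtain ⟨c', hc'⟩ : ∃ c' : List A → C, ∀ v, c' v.1 = c v :=
    ⟨Function.extend Subtype.val c fun _ => c ⟨_, isFactor_seg _ 0 one_pos⟩,
      Subtype.val_injective.extend_apply c _⟩
  obtain ⟨g, hg, col, hcol⟩ := hR fun s t => c' (List.replicate (t - s : ℕ) u).flatten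
  have hg_zero_le (i) : (g 0 : ℕ) ≤ g i := hg.monotone (Fin.zero_le i)
  have hg_lt {i j} (hij : i < j) : (g i : ℕ) < g j := hg hij
  refine ⟨fun i => (g i - g 0) * u.length, by simp, fun i j hij => ?_, col, fun i j hij hf => ?_⟩
  · exact Nat.mul_lt_mul_of_pos_right (Nat.sub_lt_sub_right (hg_zero_le i) (hg_lt hij))
      (List.length_pos_of_ne_nil hu)
  · have hlen : (g j - g 0) * u.length - (g i - g 0) * u.length = (g j - g i) * u.length := by
      rw [← Nat.sub_mul, Nat.sub_sub_sub_cancel_right (hg_zero_le i)]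
    have hle : (g i - g 0 : ℕ) + (g j - g i) ≤ H := by
      have := hg_lt hij
      omega
    rw [← hc', ← hcol i j hij, ← seg_prepend_flatten_replicate u x hle, ← hlen]

theorem MonochromaticCuts.exists_stronglyMonochromatic {y : ℕ → A}
    {c : {v : List A // IsFactor y v} → C} {n : Fin (h + 1) → ℕ} (hc : MonochromaticCuts c n)
    (hh : 1 ≤ h) (hn₀ : n 0 = 0) (hn : StrictMono n) :
    ∃ w : List A, w ≠ [] ∧ IsPrefixOf y w ∧ ∃ U : Fin h → {v : List A // IsFactor y v},
      w = (List.ofFn fun i => (U i).1).flatten ∧ StronglyMonochromatic c U := by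
  obtain ⟨col, hcol⟩ := hc
  have hpos : 0 < n (Fin.last h) := hn₀ ▸ hn (Fin.lt_def.mpr hh)
  have hflatten : seg y 0 (n (Fin.last h)) = (List.ofFn (cutBlocks y n)).flatten := by
    simpa [hn₀, List.take_of_length_le] using
      (flatten_drop_take_cutBlocks y hn.monotone (Fin.zero_le (Fin.last h))).symm
  have hfactor (t : Fin h) : IsFactor y (cutBlocks y n t) :=
    isFactor_seg y _ (Nat.sub_pos_of_lt (hn t.castSucc_lt_succ))
  refine ⟨_, (isFactor_seg y 0 hpos).1, isPrefixOf_seg y _, fun t => ⟨cutBlocks y n t, hfactor t⟩,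
    hflatten, col, fun i j hij hj => ?_⟩
  lift i to Fin (h + 1) using by omega
  lift j to Fin (h + 1) using by omega
  rw [flatten_drop_take_cutBlocks y hn.monotone hij.le]
  exact hcol i j hij

theorem stmt5_general (hh : 1 ≤ h) (hR : RamseyArrow (H + 1) (h + 1) C) (x : ℕ → A) {u : List A}
    (hu : u ≠ []) (c : {v : List A // IsFactor (prepend (List.replicate H u).flatten x) v} → C) :
    (∃ n : Fin (h + 1) → ℕ, n 0 = 0 ∧ StrictMono n ∧ MonochromaticCuts c n) ∧
    (∃ w : List A, w ≠ [] ∧ IsPrefixOf (prepend (List.replicate H u).flatten x) w ∧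
      ∃ U : Fin h → {v : List A // IsFactor (prepend (List.replicate H u).flatten x) v},
        w = (List.ofFn fun i => (U i).1).flatten ∧ StronglyMonochromatic c U) := by
  obtain ⟨n, hn₀, hn, hc⟩ := exists_monochromaticCuts hR x hu c
  exact ⟨⟨n, hn₀, hn, hc⟩, hc.exists_stronglyMonochromatic hh hn₀ hn⟩

end Colorings

/-- Let `h, k ≥ 1` and let `H` be such that every edge coloring of a
complete graph on more than `H` vertices with at most `k` colors contains a
monochromatic clique of size `h + 1`. Let `x` be an infinite word over a finite
alphabet, `u` a nonempty finite word, and `y = u^H x`. Then for every factor coloring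
`c` of `y` with at most `k` colors there exist `0 = n₀ < n₁ < ⋯ < n_h` such that all
factors `y_{[n_i, n_j - 1]}` for `i < j` get the same color; in particular, some
nonempty prefix of `y` admits a strongly `c`-monochromatic factorization of length `h`. -/
theorem stmt5 {A : Type*} {C : Type*} [Fintype A] [Fintype C]
    (h k H : ℕ) (hh : 1 ≤ h) (hk : 1 ≤ k)
    (hH : ∀ N : ℕ, H < N → ∀ c' : Fin N → Fin N → Fin k,
      ∃ g : Fin (h + 1) → Fin N, StrictMono g ∧
        ∃ col : Fin k, ∀ i j : Fin (h + 1), i < j → c' (g i) (g j) = col)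
    (x : ℕ → A) (u : List A) (hu : u ≠ [])
    (y : ℕ → A) (hy : y = prepend ((List.replicate H u).flatten) x)
    (hC : Fintype.card C ≤ k)
    (c : {v : List A // IsFactor y v} → C) :
    (∃ n : Fin (h + 1) → ℕ, n 0 = 0 ∧ StrictMono n ∧
      ∃ col : C, ∀ i j : Fin (h + 1), i < j →
        ∀ hf : IsFactor y (seg y (n i) (n j - n i)),
          c ⟨seg y (n i) (n j - n i), hf⟩ = col) ∧
    (∃ w : List A, w ≠ [] ∧ IsPrefixOf y w ∧
      ∃ U : Fin h → {v : List A // IsFactor y v},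
        w = (List.ofFn fun i => (U i).1).flatten ∧
        ∃ col : C, ∀ i j : ℕ, i < j → j ≤ h →
          ∀ hf : IsFactor y ((((List.ofFn fun t => (U t).1).take j).drop i).flatten),
            c ⟨(((List.ofFn fun t => (U t).1).take j).drop i).flatten, hf⟩ = col) := by
  subst hy
  exact stmt5_general hh (.of_card_le (by omega) (hH _ H.lt_succ_self) (by simpa using hC)) x hu c
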